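/- arXiv:2307.06306 — 3 statements merged into one kernel-verified Lean document; each statement's English description precedes it below -/
import Mathlib

section
/- Per-step decrease inequality for FedSPS, convex case (deterministic inequality from the proof of Theorem 4.2(a)): Let n ≥ 1, c ≥ 2, γ_b > 0. For each i ∈ {1,…,n} let F_i : ℝ^d → ℝ be differentiable and convex with F_i(x) ≥ ℓ_i* for all x. Let x_t^1,…,x_t^n ∈ ℝ^d with average x̄_t := (1/n)Σ_i x_t^i and drift R_t := (1/n)Σ_i‖x̄_t − x_t^i‖², set g_t^i := ∇F_i(x_t^i), γ_t^i := min{(F_i(x_t^i) − ℓ_i*)/(c‖g_t^i‖²), γ_b} (γ_t^i := γ_b if g_t^i = 0), and x̄_{t+1} := (1/n)Σ_i (x_t^i − γ_t^i g_t^i). Then for every x* ∈ ℝ^d: ‖x̄_{t+1} − x*‖² ≤ ‖x̄_t − x*‖² − (1/n) Σ_{i=1}^n γ_t^i (F_i(x_t^i) − ℓ_i*) + 2 γ_b σ_t² + R_t, where σ_t² := (1/n) Σ_{i=1}^n (F_i(x*) − ℓ_i*). -/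
open Finset

/-!
A subgradient step of length `γ` from `x` satisfies
`‖x - γ g - z‖² ≤ ‖x - z‖² + 2 γ (f z - f x) + γ · γ ‖g‖²`. The Polyak stepsize is short enough that
`γ ‖g‖² ≤ f x - ℓ`, so the last term uses up at most half of the descent `2 γ (f x - ℓ)` contained
in the middle one, whose remaining part `2 γ (f z - ℓ)` is at most `2 γb (f z - ℓ)`.
Averaging over the clients costs nothing on the left (Jensen) and exactly the drift on the right,
by the decomposition of the mean square distance to a point into variance and squared bias.
-/

theorem add_apply_sub_le_of_convexOn_of_hasFDerivWithinAt
    {E : Type*} [NormedAddCommGroup E] [NormedSpace ℝ E]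
    {s : Set E} {f : E → ℝ} {f' : E →L[ℝ] ℝ} {x y : E}
    (hf : ConvexOn ℝ s f) (hf' : HasFDerivWithinAt f f' s x) (hx : x ∈ s) (hy : y ∈ s) :
    f x + f' (y - x) ≤ f y := by
  let L : ℝ →ᵃ[ℝ] E := AffineMap.lineMap x y
  have hL0 : L 0 = x := AffineMap.lineMap_apply_zero x y
  have hL1 : L 1 = y := AffineMap.lineMap_apply_one x y
  have hderiv : HasDerivWithinAt (f ∘ L) (f' (y - x)) (L ⁻¹' s) 0 :=
    HasFDerivWithinAt.comp_hasDerivWithinAt 0 (hL0.symm ▸ hf')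
      AffineMap.hasDerivWithinAt_lineMap (Set.mapsTo_preimage L s)
  have hslope : f' (y - x) ≤ slope (f ∘ L) 0 1 :=
    (hf.comp_affineMap L).le_slope_of_hasDerivWithinAt
      (by rwa [Set.mem_preimage, hL0]) (by rwa [Set.mem_preimage, hL1]) one_pos hderiv
  have hslope_eq : slope (f ∘ L) 0 1 = f y - f x := by
    simp only [slope_def_field, Function.comp_apply, hL0, hL1, sub_zero, div_one]
  linarith

section PolyakStepsize

variable {E : Type*} [NormedAddCommGroup E]

open scoped Classical in
/-- The capped stochastic Polyak stepsize `min {gap / (c ‖g‖²), γb}` with scaling `c` and cap `γb`,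
at a point with (sub)gradient `g` whose loss exceeds its lower bound by `gap`. The case `g = 0`
is separate because there the quotient, meant as `+∞`, would be `0` in Lean. -/
noncomputable def polyakStepsize (c γb gap : ℝ) (g : E) : ℝ :=
  if g = 0 then γb else min (gap / (c * ‖g‖ ^ 2)) γb

variable {c γb gap : ℝ}

theorem polyakStepsize_nonneg (hc : 0 ≤ c) (hγb : 0 ≤ γb) (hgap : 0 ≤ gap) (g : E) :
    0 ≤ polyakStepsize c γb gap g := by
  unfold polyakStepsize
  split_ifs
  · exact hγb
  · positivity

theorem polyakStepsize_le_cap (c γb gap : ℝ) (g : E) : polyakStepsize c γb gap g ≤ γb := by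
  unfold polyakStepsize
  split_ifs
  · exact le_rfl
  · exact min_le_right _ _

theorem polyakStepsize_mul_sq_norm_le (hc : 1 ≤ c) (hgap : 0 ≤ gap) (g : E) :
    polyakStepsize c γb gap g * ‖g‖ ^ 2 ≤ gap := by
  by_cases hg : g = 0
  · simpa [hg] using hgap
  · have hpos : 0 < ‖g‖ ^ 2 := by positivity
    have hquotient : polyakStepsize c γb gap g ≤ gap / (c * ‖g‖ ^ 2) := by
      rw [polyakStepsize, if_neg hg]
      exact min_le_left _ _
    have hscale : gap / (c * ‖g‖ ^ 2) ≤ gap / ‖g‖ ^ 2 :=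
      div_le_div_of_nonneg_left hgap hpos (le_mul_of_one_le_left hpos.le hc)
    exact mul_le_of_le_div₀ hgap hpos.le (hquotient.trans hscale)

end PolyakStepsize

variable {E : Type*} [NormedAddCommGroup E] [InnerProductSpace ℝ E]

section Subgradient

/-- `g` is a subgradient of the real-valued function `f` at `x`: the affine function with slope `g`
that agrees with `f` at `x` minorizes `f` on the whole space. It replaces the gradient of a
convex function wherever differentiability is irrelevant. -/
def IsSubgradientAt (f : E → ℝ) (g x : E) : Prop :=
  ∀ y, f x + inner ℝ g (y - x) ≤ f y

theorem isSubgradientAt_of_convexOn_of_hasGradientAt [CompleteSpace E] {f : E → ℝ} {g x : E}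
    (hf : ConvexOn ℝ Set.univ f) (hg : HasGradientAt f g x) : IsSubgradientAt f g x := fun y ↦ by
  simpa only [InnerProductSpace.toDual_apply_apply] using
    add_apply_sub_le_of_convexOn_of_hasFDerivWithinAt hf hg.hasFDerivAt.hasFDerivWithinAt
      (Set.mem_univ x) (Set.mem_univ y)

theorem IsSubgradientAt.sq_norm_step_sub_le {f : E → ℝ} {g x : E} (hg : IsSubgradientAt f g x)
    {γ : ℝ} (hγ : 0 ≤ γ) (z : E) :
    ‖x - γ • g - z‖ ^ 2 ≤ ‖x - z‖ ^ 2 + 2 * γ * (f z - f x) + γ * (γ * ‖g‖ ^ 2) := by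
  have hexpand : ‖x - γ • g - z‖ ^ 2
      = ‖x - z‖ ^ 2 + 2 * γ * inner ℝ g (z - x) + γ * (γ * ‖g‖ ^ 2) := by
    rw [sub_right_comm, norm_sub_sq_real, real_inner_smul_right, norm_smul, mul_pow,
      Real.norm_eq_abs, sq_abs, real_inner_comm, ← neg_sub z x, inner_neg_right]
    ring
  have hinner : inner ℝ g (z - x) ≤ f z - f x := le_sub_iff_add_le'.2 (hg z)
  rw [hexpand]
  gcongr

theorem IsSubgradientAt.sq_norm_short_step_sub_le {f : E → ℝ} {g x z : E}
    (hg : IsSubgradientAt f g x) {γ γb ℓ : ℝ} (hγ : 0 ≤ γ) (hγb : γ ≤ γb) (hz : ℓ ≤ f z)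
    (hshort : γ * ‖g‖ ^ 2 ≤ f x - ℓ) :
    ‖x - γ • g - z‖ ^ 2 ≤ ‖x - z‖ ^ 2 - γ * (f x - ℓ) + 2 * γb * (f z - ℓ) :=
  calc ‖x - γ • g - z‖ ^ 2
      ≤ ‖x - z‖ ^ 2 + 2 * γ * (f z - f x) + γ * (γ * ‖g‖ ^ 2) := hg.sq_norm_step_sub_le hγ z
    _ ≤ ‖x - z‖ ^ 2 + 2 * γ * (f z - f x) + γ * (f x - ℓ) := by gcongr
    _ = ‖x - z‖ ^ 2 - γ * (f x - ℓ) + 2 * γ * (f z - ℓ) := by ring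
    _ ≤ ‖x - z‖ ^ 2 - γ * (f x - ℓ) + 2 * γb * (f z - ℓ) := by gcongr

theorem IsSubgradientAt.sq_norm_polyak_step_sub_le {f : E → ℝ} {g x z : E}
    (hg : IsSubgradientAt f g x) {c γb ℓ : ℝ} (hc : 1 ≤ c) (hγb : 0 ≤ γb)
    (hx : ℓ ≤ f x) (hz : ℓ ≤ f z) :
    ‖x - polyakStepsize c γb (f x - ℓ) g • g - z‖ ^ 2
      ≤ ‖x - z‖ ^ 2 - polyakStepsize c γb (f x - ℓ) g * (f x - ℓ) + 2 * γb * (f z - ℓ) :=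
  have hgap : 0 ≤ f x - ℓ := sub_nonneg.2 hx
  hg.sq_norm_short_step_sub_le (polyakStepsize_nonneg (zero_le_one.trans hc) hγb hgap g)
    (polyakStepsize_le_cap c γb _ g) hz (polyakStepsize_mul_sq_norm_le hc hgap g)

end Subgradient

section WeightedMean

variable {ι : Type*} {s : Finset ι} {w : ι → ℝ}

theorem sum_mul_sq_norm_sub_eq (hw : ∑ i ∈ s, w i = 1) (y : ι → E) (z : E) :
    ∑ i ∈ s, w i * ‖y i - z‖ ^ 2 = ‖∑ i ∈ s, w i • y i - z‖ ^ 2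
      + ∑ i ∈ s, w i * ‖∑ j ∈ s, w j • y j - y i‖ ^ 2 := by
  set m := ∑ i ∈ s, w i • y i with hm
  have hcentered : ∑ i ∈ s, w i • (m - y i) = 0 := by
    simp only [smul_sub, sum_sub_distrib, ← sum_smul, hw, one_smul, ← hm, sub_self]
  have hcross : ∑ i ∈ s, w i * inner ℝ (m - z) (m - y i) = 0 := by
    simp only [← real_inner_smul_right, ← inner_sum, hcentered, inner_zero_right]
  calc ∑ i ∈ s, w i * ‖y i - z‖ ^ 2
      = ∑ i ∈ s, (w i * ‖m - z‖ ^ 2 - 2 * (w i * inner ℝ (m - z) (m - y i))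
          + w i * ‖m - y i‖ ^ 2) := by
        refine sum_congr rfl fun i _ ↦ ?_
        rw [← sub_sub_sub_cancel_left z (y i) m, norm_sub_sq_real]
        ring
    _ = ‖m - z‖ ^ 2 + ∑ i ∈ s, w i * ‖m - y i‖ ^ 2 := by
        rw [sum_add_distrib, sum_sub_distrib, ← sum_mul, ← mul_sum, hw, hcross]
        ring

theorem sq_norm_sum_smul_sub_le (hw₀ : ∀ i ∈ s, 0 ≤ w i) (hw : ∑ i ∈ s, w i = 1)
    (y : ι → E) (z : E) :
    ‖∑ i ∈ s, w i • y i - z‖ ^ 2 ≤ ∑ i ∈ s, w i * ‖y i - z‖ ^ 2 := by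
  rw [sum_mul_sq_norm_sub_eq hw]
  exact le_add_of_nonneg_right (sum_nonneg fun i hi ↦ mul_nonneg (hw₀ i hi) (sq_nonneg _))

end WeightedMean

theorem fedsps_per_step_decrease_general {ι : Type*} [Fintype ι] {w : ι → ℝ}
    (hw₀ : ∀ i, 0 ≤ w i) (hw : ∑ i, w i = 1)
    {c γb : ℝ} (hc : 1 ≤ c) (hγb : 0 ≤ γb)
    {F : ι → E → ℝ} {ℓ : ι → ℝ} (hℓ : ∀ i x, ℓ i ≤ F i x)
    {x g : ι → E} (hg : ∀ i, IsSubgradientAt (F i) (g i) (x i))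
    {γ : ι → ℝ} (hγ : ∀ i, γ i = polyakStepsize c γb (F i (x i) - ℓ i) (g i))
    {xbar xbar1 : E} (hxbar : xbar = ∑ i, w i • x i)
    (hxbar1 : xbar1 = ∑ i, w i • (x i - γ i • g i)) (xstar : E) :
    ‖xbar1 - xstar‖ ^ 2 ≤ ‖xbar - xstar‖ ^ 2
      - ∑ i, w i * (γ i * (F i (x i) - ℓ i))
      + 2 * γb * ∑ i, w i * (F i xstar - ℓ i)
      + ∑ i, w i * ‖xbar - x i‖ ^ 2 := by
  have hclient (i : ι) : ‖x i - γ i • g i - xstar‖ ^ 2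
      ≤ ‖x i - xstar‖ ^ 2 - γ i * (F i (x i) - ℓ i) + 2 * γb * (F i xstar - ℓ i) :=
    hγ i ▸ (hg i).sq_norm_polyak_step_sub_le hc hγb (hℓ i (x i)) (hℓ i xstar)
  calc ‖xbar1 - xstar‖ ^ 2
      ≤ ∑ i, w i * ‖x i - γ i • g i - xstar‖ ^ 2 :=
        hxbar1 ▸ sq_norm_sum_smul_sub_le (fun i _ ↦ hw₀ i) hw _ xstar
    _ ≤ ∑ i, w i * (‖x i - xstar‖ ^ 2 - γ i * (F i (x i) - ℓ i)
          + 2 * γb * (F i xstar - ℓ i)) :=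
        sum_le_sum fun i _ ↦ mul_le_mul_of_nonneg_left (hclient i) (hw₀ i)
    _ = ∑ i, w i * ‖x i - xstar‖ ^ 2 - ∑ i, w i * (γ i * (F i (x i) - ℓ i))
          + 2 * γb * ∑ i, w i * (F i xstar - ℓ i) := by
        simp only [mul_add, mul_sub, sum_add_distrib, sum_sub_distrib, mul_sum, mul_left_comm]
    _ = _ := by
        rw [sum_mul_sq_norm_sub_eq hw, ← hxbar]
        ring

open scoped Classical in
/-- **Per-step decrease inequality for FedSPS, convex case (from the proof of Theorem 4.2(a)).** -/
theorem fedsps_per_step_decrease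
    {d n : ℕ} (hn : 1 ≤ n)
    (c γb : ℝ) (hc : (2 : ℝ) ≤ c) (hγb : 0 < γb)
    (F : Fin n → EuclideanSpace ℝ (Fin d) → ℝ)
    (hdiff : ∀ i, Differentiable ℝ (F i))
    (hconv : ∀ i, ConvexOn ℝ Set.univ (F i))
    (ℓ : Fin n → ℝ) (hℓ : ∀ i x, ℓ i ≤ F i x)
    (xt : Fin n → EuclideanSpace ℝ (Fin d))
    (γ : Fin n → ℝ)
    (hγ : ∀ i, γ i = if gradient (F i) (xt i) = 0 then γb
      else min ((F i (xt i) - ℓ i) / (c * ‖gradient (F i) (xt i)‖ ^ 2)) γb)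
    (xbar xbar1 : EuclideanSpace ℝ (Fin d))
    (hxbar : xbar = (n : ℝ)⁻¹ • ∑ i, xt i)
    (hxbar1 : xbar1 = (n : ℝ)⁻¹ • ∑ i, (xt i - γ i • gradient (F i) (xt i)))
    (xstar : EuclideanSpace ℝ (Fin d)) :
    ‖xbar1 - xstar‖ ^ 2 ≤ ‖xbar - xstar‖ ^ 2
      - (n : ℝ)⁻¹ * ∑ i, γ i * (F i (xt i) - ℓ i)
      + 2 * γb * ((n : ℝ)⁻¹ * ∑ i, (F i xstar - ℓ i))
      + (n : ℝ)⁻¹ * ∑ i, ‖xbar - xt i‖ ^ 2 := by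
  have hw : ∑ _i : Fin n, (n : ℝ)⁻¹ = 1 := by simp [Nat.one_le_iff_ne_zero.1 hn]
  simpa only [← mul_sum] using fedsps_per_step_decrease_general (fun _ ↦ by positivity) hw
    (one_le_two.trans hc) hγb.le hℓ
    (fun i ↦ isSubgradientAt_of_convexOn_of_hasGradientAt (hconv i) (hdiff i (xt i)).hasGradientAt)
    (fun i ↦ by unfold polyakStepsize; convert hγ i) (hxbar.trans smul_sum) (hxbar1.trans smul_sum)
    xstar
end

section
/- Upper and lower bounds on FedDecSPS stepsizes (Lemma D.1): Let F_0, F_1, F_2, … : ℝ^d → ℝ be differentiable L-smooth functions each bounded below with ℓ* ≤ inf_x F_t(x) for all t, let (c_t)_{t≥0} be a nondecreasing positive sequence of reals with the convention c_{−1} := c_0, let γ_b > 0 and γ_{−1} := γ_b, and let x_0, x_1, x_2, … ∈ ℝ^d be arbitrary points with ∇F_t(x_t) ≠ 0. Define recursively γ_t := (1/c_t) min{(F_t(x_t) − ℓ*)/‖∇F_t(x_t)‖², c_{t−1} γ_{t−1}}. Then for all t ≥ 0: γ_t ≤ γ_{t−1}, and min{1/(2 c_t L), c_0 γ_b / c_t}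 ≤ γ_t ≤ c_0 γ_b / c_t. -/
/-!
The scaled sequence `c t * γ t` is the running minimum of `c 0 * γb` and the Polyak ratios
`(F t (x t) - ℓ) / ‖∇ (F t) (x t)‖ ^ 2`. It is therefore antitone, at most `c 0 * γb`, and inherits
from the ratios the lower bound `1 / (2 * L)`, which comes from the decrease of `F t` along one
gradient step with stepsize `1 / L`. Dividing by the monotone sequence `c` gives all the claims.
-/

section LipschitzGradient

open scoped Gradient RealInnerProductSpace

variable {E : Type*} [NormedAddCommGroup E] [InnerProductSpace ℝ E] [CompleteSpace E]
  {f : E → ℝ} {L : ℝ} {x : E}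

lemma hasDerivAt_comp_add_smul {v : E} {s : ℝ} (hf : DifferentiableAt ℝ f (x + s • v)) :
    HasDerivAt (fun r : ℝ => f (x + r • v)) ⟪∇ f (x + s • v), v⟫ s := by
  have hline : HasDerivAt (fun r : ℝ => x + r • v) v s := by
    simpa using ((hasDerivAt_id s).smul_const v).const_add x
  rw [inner_gradient_left]
  exact hf.hasFDerivAt.comp_hasDerivAt s hline

lemma inner_gradient_add_smul_le (hL : ∀ y, ‖∇ f y - ∇ f x‖ ≤ L * ‖y - x‖) (v : E)
    {s : ℝ} (hs : 0 ≤ s) :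
    ⟪∇ f (x + s • v), v⟫ ≤ ⟪∇ f x, v⟫ + L * s * ‖v‖ ^ 2 := by
  have hdiff : ⟪∇ f (x + s • v) - ∇ f x, v⟫ ≤ L * s * ‖v‖ ^ 2 :=
    calc ⟪∇ f (x + s • v) - ∇ f x, v⟫
        ≤ ‖∇ f (x + s • v) - ∇ f x‖ * ‖v‖ := real_inner_le_norm _ _
      _ ≤ L * ‖x + s • v - x‖ * ‖v‖ := by gcongr; exact hL _
      _ = L * s * ‖v‖ ^ 2 := by
        rw [add_sub_cancel_left, norm_smul, Real.norm_of_nonneg hs]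
        ring
  rw [inner_sub_left] at hdiff
  linarith

lemma le_add_inner_gradient_add_sq (hf : Differentiable ℝ f)
    (hL : ∀ y, ‖∇ f y - ∇ f x‖ ≤ L * ‖y - x‖) (v : E) :
    f (x + v) ≤ f x + ⟪∇ f x, v⟫ + L / 2 * ‖v‖ ^ 2 := by
  let gap : ℝ → ℝ := fun s => f (x + s • v) - (s * ⟪∇ f x, v⟫ + s ^ 2 * (L / 2 * ‖v‖ ^ 2))
  have hgap (s : ℝ) : HasDerivAt gap
      (⟪∇ f (x + s • v), v⟫ - (⟪∇ f x, v⟫ + L * s * ‖v‖ ^ 2)) s := by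
    refine (hasDerivAt_comp_add_smul (hf _)).sub <|
      (((hasDerivAt_id s).mul_const _).add ((hasDerivAt_pow 2 s).mul_const _)).congr_deriv ?_
    simp only [Nat.cast_ofNat, Nat.add_one_sub_one, pow_one]
    ring
  have hanti : AntitoneOn gap (Set.Ici 0) := by
    refine antitoneOn_of_hasDerivWithinAt_nonpos (convex_Ici 0)
      (fun s _ => (hgap s).continuousAt.continuousWithinAt)
      (fun s _ => (hgap s).hasDerivWithinAt) fun s hs => ?_
    exact sub_nonpos.mpr (inner_gradient_add_smul_le hL v (interior_subset hs))
  have hle : gap 1 ≤ gap 0 := hanti Set.self_mem_Ici (Set.mem_Ici.mpr zero_le_one) zero_le_one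
  simp only [gap, one_smul, zero_smul, add_zero] at hle
  linarith

lemma norm_gradient_sq_le (hf : Differentiable ℝ f) (hLpos : 0 < L)
    (hL : ∀ y, ‖∇ f y - ∇ f x‖ ≤ L * ‖y - x‖) {ℓ : ℝ} (hℓ : ∀ y, ℓ ≤ f y) :
    ‖∇ f x‖ ^ 2 ≤ 2 * L * (f x - ℓ) := by
  have hstep : ℓ ≤ f x - ‖∇ f x‖ ^ 2 / (2 * L) :=
    calc ℓ ≤ f (x + -(L⁻¹ • ∇ f x)) := hℓ _
      _ ≤ f x + ⟪∇ f x, -(L⁻¹ • ∇ f x)⟫ + L / 2 * ‖-(L⁻¹ • ∇ f x)‖ ^ 2 :=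
        le_add_inner_gradient_add_sq hf hL _
      _ = f x - ‖∇ f x‖ ^ 2 / (2 * L) := by
        rw [inner_neg_right, real_inner_smul_right, real_inner_self_eq_norm_sq, norm_neg,
          norm_smul, Real.norm_of_nonneg (inv_nonneg.mpr hLpos.le)]
        field_simp
        ring
  rw [← div_le_iff₀' (by positivity)]
  linarith

lemma one_div_two_mul_le_sub_div_norm_gradient_sq (hf : Differentiable ℝ f) (hLpos : 0 < L)
    (hL : ∀ y, ‖∇ f y - ∇ f x‖ ≤ L * ‖y - x‖) {ℓ : ℝ} (hℓ : ∀ y, ℓ ≤ f y) (hx : ∇ f x ≠ 0) :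
    1 / (2 * L) ≤ (f x - ℓ) / ‖∇ f x‖ ^ 2 := by
  rw [div_le_div_iff₀ (by positivity) (pow_pos (norm_pos_iff.mpr hx) 2), one_mul,
    mul_comm (f x - ℓ)]
  exact norm_gradient_sq_le hf hLpos hL hℓ

end LipschitzGradient

/-- `γ` is the FedDecSPS stepsize sequence `γ_t = (1 / c_t) min {r_t, c_{t-1} γ_{t-1}}`, with an
arbitrary sequence `r` in place of the Polyak ratios. The conventions `c_{-1} = c_0` and
`γ_{-1} = γb` are absorbed into the field `zero`. -/
structure IsFedDecSPSStepsize (r c : ℕ → ℝ) (γb : ℝ) (γ : ℕ → ℝ) : Prop where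
  zero : γ 0 = (c 0)⁻¹ * min (r 0) (c 0 * γb)
  succ : ∀ t, γ (t + 1) = (c (t + 1))⁻¹ * min (r (t + 1)) (c t * γ t)

namespace IsFedDecSPSStepsize

variable {r c γ : ℕ → ℝ} {γb a : ℝ}

lemma mul_zero_eq (h : IsFedDecSPSStepsize r c γb γ) (hc : c 0 ≠ 0) :
    c 0 * γ 0 = min (r 0) (c 0 * γb) := by
  rw [h.zero, mul_inv_cancel_left₀ hc]

lemma mul_succ_eq (h : IsFedDecSPSStepsize r c γb γ) {t : ℕ} (hc : c (t + 1) ≠ 0) :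
    c (t + 1) * γ (t + 1) = min (r (t + 1)) (c t * γ t) := by
  rw [h.succ, mul_inv_cancel_left₀ hc]

lemma antitone_mul (h : IsFedDecSPSStepsize r c γb γ) (hc : ∀ t, c t ≠ 0) :
    Antitone fun t => c t * γ t :=
  antitone_nat_of_succ_le fun t => (h.mul_succ_eq (hc (t + 1))).trans_le (min_le_right _ _)

lemma mul_le (h : IsFedDecSPSStepsize r c γb γ) (hc : ∀ t, c t ≠ 0) (t : ℕ) :
    c t * γ t ≤ c 0 * γb :=
  (h.antitone_mul hc t.zero_le).trans ((h.mul_zero_eq (hc 0)).trans_le (min_le_right _ _))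

lemma min_le_mul (h : IsFedDecSPSStepsize r c γb γ) (hc : ∀ t, c t ≠ 0) (ha : ∀ t, a ≤ r t)
    (t : ℕ) : min a (c 0 * γb) ≤ c t * γ t := by
  induction t with
  | zero =>
    rw [h.mul_zero_eq (hc 0)]
    exact min_le_min_right _ (ha 0)
  | succ t ih =>
    rw [h.mul_succ_eq (hc (t + 1))]
    exact le_min ((min_le_left _ _).trans (ha (t + 1))) ih

lemma le_div (h : IsFedDecSPSStepsize r c γb γ) (hc : ∀ t, 0 < c t) (t : ℕ) :
    γ t ≤ c 0 * γb / c t :=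
  (le_div_iff₀' (hc t)).mpr (h.mul_le (fun t => (hc t).ne') t)

lemma min_div_le (h : IsFedDecSPSStepsize r c γb γ) (hc : ∀ t, 0 < c t) (ha : ∀ t, a ≤ r t)
    (t : ℕ) : min (a / c t) (c 0 * γb / c t) ≤ γ t := by
  rw [min_div_div_right (hc t).le, div_le_iff₀' (hc t)]
  exact h.min_le_mul (fun t => (hc t).ne') ha t

lemma apply_zero_le (h : IsFedDecSPSStepsize r c γb γ) (hc : 0 < c 0) : γ 0 ≤ γb :=
  le_of_mul_le_mul_left ((h.mul_zero_eq hc.ne').trans_le (min_le_right _ _)) hc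

lemma nonneg (h : IsFedDecSPSStepsize r c γb γ) (hc : ∀ t, 0 < c t) (hr : ∀ t, 0 ≤ r t)
    (hγb : 0 ≤ γb) (t : ℕ) : 0 ≤ γ t := by
  have hmul : 0 ≤ c t * γ t :=
    (le_min le_rfl (mul_nonneg (hc 0).le hγb)).trans (h.min_le_mul (fun t => (hc t).ne') hr t)
  exact nonneg_of_mul_nonneg_right hmul (hc t)

lemma antitone (h : IsFedDecSPSStepsize r c γb γ) (hc : ∀ t, 0 < c t) (hcmono : Monotone c)
    (hr : ∀ t, 0 ≤ r t) (hγb : 0 ≤ γb) : Antitone γ := by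
  refine antitone_nat_of_succ_le fun t => le_of_mul_le_mul_left ?_ (hc (t + 1))
  calc c (t + 1) * γ (t + 1) ≤ c t * γ t := h.antitone_mul (fun t => (hc t).ne') t.le_succ
    _ ≤ c (t + 1) * γ t :=
      mul_le_mul_of_nonneg_right (hcmono t.le_succ) (h.nonneg hc hr hγb t)

end IsFedDecSPSStepsize

theorem feddecsps_stepsize_bounds_general
    {E : Type*} [NormedAddCommGroup E] [InnerProductSpace ℝ E] [CompleteSpace E]
    {F : ℕ → E → ℝ} {L : ℝ} {x : ℕ → E} {ℓ : ℝ} {c γ : ℕ → ℝ} {γb : ℝ} (hL : 0 < L)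
    (hdiff : ∀ t, Differentiable ℝ (F t))
    (hsmooth : ∀ t y, ‖gradient (F t) y - gradient (F t) (x t)‖ ≤ L * ‖y - x t‖)
    (hℓ : ∀ t y, ℓ ≤ F t y) (hcpos : ∀ t, 0 < c t) (hcmono : Monotone c) (hγb : 0 ≤ γb)
    (hx : ∀ t, gradient (F t) (x t) ≠ 0)
    (hγ : IsFedDecSPSStepsize (fun t => (F t (x t) - ℓ) / ‖gradient (F t) (x t)‖ ^ 2) c γb γ) :
    (γ 0 ≤ γb ∧ ∀ t, γ (t + 1) ≤ γ t) ∧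
    ∀ t, min (1 / (2 * c t * L)) (c 0 * γb / c t) ≤ γ t ∧ γ t ≤ c 0 * γb / c t := by
  have hratio (t : ℕ) : 1 / (2 * L) ≤ (F t (x t) - ℓ) / ‖gradient (F t) (x t)‖ ^ 2 :=
    one_div_two_mul_le_sub_div_norm_gradient_sq (hdiff t) hL (hsmooth t) (hℓ t) (hx t)
  have hratio_nonneg (t : ℕ) : 0 ≤ (F t (x t) - ℓ) / ‖gradient (F t) (x t)‖ ^ 2 :=
    div_nonneg (sub_nonneg.mpr (hℓ t (x t))) (sq_nonneg _)
  have hanti : Antitone γ := hγ.antitone hcpos hcmono hratio_nonneg hγb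
  refine ⟨⟨hγ.apply_zero_le (hcpos 0), fun t => hanti t.le_succ⟩,
    fun t => ⟨?_, hγ.le_div hcpos t⟩⟩
  rw [mul_right_comm, ← div_div]
  exact hγ.min_div_le hcpos hratio t

/-- **Upper and lower bounds on FedDecSPS stepsizes (Lemma D.1).** -/
theorem feddecsps_stepsize_bounds
    {d : ℕ} (F : ℕ → EuclideanSpace ℝ (Fin d) → ℝ)
    (L : ℝ) (hL : 0 < L)
    (hdiff : ∀ t, Differentiable ℝ (F t))
    (hsmooth : ∀ t (x y : EuclideanSpace ℝ (Fin d)),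
      ‖gradient (F t) x - gradient (F t) y‖ ≤ L * ‖x - y‖)
    (hbdd : ∀ t, BddBelow (Set.range (F t)))
    (ℓ : ℝ) (hℓ : ∀ t x, ℓ ≤ F t x)
    (c : ℕ → ℝ) (hcpos : ∀ t, 0 < c t) (hcmono : ∀ t, c t ≤ c (t + 1))
    (γb : ℝ) (hγb : 0 < γb)
    (x : ℕ → EuclideanSpace ℝ (Fin d)) (hx : ∀ t, gradient (F t) (x t) ≠ 0)
    (γ : ℕ → ℝ)
    (hγ0 : γ 0 = (c 0)⁻¹ *
      min ((F 0 (x 0) - ℓ) / ‖gradient (F 0) (x 0)‖ ^ 2) (c 0 * γb))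
    (hγs : ∀ t, γ (t + 1) = (c (t + 1))⁻¹ *
      min ((F (t + 1) (x (t + 1)) - ℓ) / ‖gradient (F (t + 1)) (x (t + 1))‖ ^ 2)
        (c t * γ t)) :
    (γ 0 ≤ γb ∧ ∀ t, γ (t + 1) ≤ γ t) ∧
    ∀ t, min (1 / (2 * c t * L)) (c 0 * γb / c t) ≤ γ t ∧ γ t ≤ c 0 * γb / c t :=
  feddecsps_stepsize_bounds_general hL hdiff (fun t y => hsmooth t y (x t)) hℓ hcpos
    (monotone_nat_of_le_succ hcmono) hγb.le hx ⟨hγ0, hγs⟩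
end

section
/- Difference lemma for FedDecSPS (Lemma D.3, deterministic form): Let n ≥ 1, τ ≥ 1, and let (c_j) be positive reals. Let t_0 ≤ t with t − t_0 ≤ τ. For each client i ∈ {1,…,n} and each j ∈ {t_0,…,t−1}, let F_{i,j} : ℝ^d → ℝ be differentiable with F_{i,j}(x) ≥ ℓ_i* for all x. Suppose x_{t_0}^i = y for all i, and for j = t_0,…,t−1 the iterates evolve by x_{j+1}^i = x_j^i − γ_j^i g_j^i with g_j^i := ∇F_{i,j}(x_j^i), where the stepsizes satisfy the FedDecSPS inequalities ‖γ_j^i g_j^i‖² ≤ (γ_j^i/c_j)(F_{i,j}(x_j^i) − ℓ_i*) and γ_j^i ≤ c_0 γ_b / c_j. Then for every x* ∈ ℝ^d, with x̄_t := (1/n)Σ_i x_t^i: (1/n) Σ_{i=1}^n ‖x̄_t − x_t^i‖² ≤ (τ/n) Σ_{i=1}^n Σ_{j=t_0}^{t−1} (γ_j^i/c_j)(F_{i,j}(x_j^i) − F_{i,j}(x*)) + (c_0 γ_b τ/n) Σ_{i=1}^n Σ_{j=t_0}^{t−1} (1/c_j²)(F_{i,j}(x*) − ℓ_i*). -/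
open Finset

/-!
The weighted mean minimises the weighted sum of squared distances, so the drift around `x̄_t` is at
most the drift around the common starting point `y`. Each client reaches `x_t^i` from `y` in at most
`τ` steps, and Cauchy-Schwarz bounds the squared displacement by `τ` times the sum of the squared
steps. The stepsize rule bounds each of these by `(γ/c)(F(x) - ℓ)`, which is split as
`(γ/c)(F(x) - F(x*)) + (γ/c)(F(x*) - ℓ)`; the cap on `γ` is spent on the second, nonnegative term
only.
-/

section WeightedMean

variable {ι E : Type*} [SeminormedAddCommGroup E] [InnerProductSpace ℝ E]

theorem sum_mul_norm_sub_sq_eq_add_norm_sub_weightedMean_sq (s : Finset ι) {w : ι → ℝ}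
    (hw : ∑ i ∈ s, w i = 1) (z : ι → E) (y : E) :
    ∑ i ∈ s, w i * ‖y - z i‖ ^ 2 =
      ∑ i ∈ s, w i * ‖(∑ k ∈ s, w k • z k) - z i‖ ^ 2 + ‖y - ∑ k ∈ s, w k • z k‖ ^ 2 := by
  set m := ∑ k ∈ s, w k • z k with hm
  have sum_deviation : ∑ i ∈ s, w i • (m - z i) = 0 := by
    simp only [smul_sub, sum_sub_distrib, ← sum_smul, hw, one_smul, ← hm, sub_self]
  have cross_terms : ∑ i ∈ s, w i * inner ℝ (y - m) (m - z i) = 0 := by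
    simp only [← real_inner_smul_right, ← inner_sum, sum_deviation, inner_zero_right]
  have expand (i : ι) : w i * ‖y - z i‖ ^ 2 =
      w i * ‖m - z i‖ ^ 2 + 2 * (w i * inner ℝ (y - m) (m - z i)) + w i * ‖y - m‖ ^ 2 := by
    rw [← sub_add_sub_cancel y m (z i), norm_add_sq_real]
    ring
  simp only [expand, sum_add_distrib, ← mul_sum, ← sum_mul, cross_terms, hw]
  ring

theorem sum_mul_norm_weightedMean_sub_sq_le (s : Finset ι) {w : ι → ℝ}
    (hw : ∑ i ∈ s, w i = 1) (z : ι → E) (y : E) :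
    ∑ i ∈ s, w i * ‖(∑ k ∈ s, w k • z k) - z i‖ ^ 2 ≤ ∑ i ∈ s, w i * ‖y - z i‖ ^ 2 := by
  rw [sum_mul_norm_sub_sq_eq_add_norm_sub_weightedMean_sq s hw z y]
  exact le_add_of_nonneg_right (sq_nonneg _)

end WeightedMean

theorem dist_sq_le_mul_sum_Ico_dist_sq {X : Type*} [PseudoMetricSpace X] (x : ℕ → X)
    {a b : ℕ} (hab : a ≤ b) :
    dist (x a) (x b) ^ 2 ≤ (b - a : ℕ) * ∑ j ∈ Ico a b, dist (x j) (x (j + 1)) ^ 2 := by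
  calc dist (x a) (x b) ^ 2
      ≤ (∑ j ∈ Ico a b, dist (x j) (x (j + 1))) ^ 2 := by
        gcongr
        exact dist_le_Ico_sum_dist x hab
    _ ≤ (b - a : ℕ) * ∑ j ∈ Ico a b, dist (x j) (x (j + 1)) ^ 2 := by
        simpa only [Nat.card_Ico] using
          sq_sum_le_card_mul_sum_sq (s := Ico a b) (f := fun j => dist (x j) (x (j + 1)))

theorem div_mul_sub_le_of_le_div {γ c B u v ℓ : ℝ} (hc : 0 ≤ c) (hγ : γ ≤ B / c) (hℓ : ℓ ≤ v) :
    γ / c * (u - ℓ) ≤ γ / c * (u - v) + B * (1 / c ^ 2 * (v - ℓ)) := by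
  have ratio_le : γ / c ≤ B * (1 / c ^ 2) :=
    calc γ / c ≤ B / c / c := by gcongr
      _ = B * (1 / c ^ 2) := by rw [div_div, ← sq, mul_one_div]
  calc γ / c * (u - ℓ) = γ / c * (u - v) + γ / c * (v - ℓ) := by ring
    _ ≤ γ / c * (u - v) + B * (1 / c ^ 2) * (v - ℓ) := by gcongr
    _ = γ / c * (u - v) + B * (1 / c ^ 2 * (v - ℓ)) := by rw [mul_assoc]

theorem dist_sq_le_mul_sum_of_stepsize_le {X : Type*} [PseudoMetricSpace X] {t0 t τ : ℕ}
    (ht0 : t0 ≤ t) (ht : t - t0 ≤ τ) {c γ : ℕ → ℝ} {B ℓ : ℝ} {F : ℕ → X → ℝ} {x : ℕ → X}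
    {xstar : X} (hc : ∀ j ∈ Ico t0 t, 0 ≤ c j) (hℓ : ∀ j ∈ Ico t0 t, ℓ ≤ F j xstar)
    (hstep : ∀ j ∈ Ico t0 t, dist (x j) (x (j + 1)) ^ 2 ≤ γ j / c j * (F j (x j) - ℓ))
    (hγ : ∀ j ∈ Ico t0 t, γ j ≤ B / c j) :
    dist (x t0) (x t) ^ 2 ≤
      τ * ∑ j ∈ Ico t0 t, (γ j / c j * (F j (x j) - F j xstar)
        + B * (1 / c j ^ 2 * (F j xstar - ℓ))) := by
  calc dist (x t0) (x t) ^ 2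
      ≤ (t - t0 : ℕ) * ∑ j ∈ Ico t0 t, dist (x j) (x (j + 1)) ^ 2 :=
        dist_sq_le_mul_sum_Ico_dist_sq x ht0
    _ ≤ τ * ∑ j ∈ Ico t0 t, dist (x j) (x (j + 1)) ^ 2 := by gcongr
    _ ≤ _ := by
        gcongr with j hj
        exact (hstep j hj).trans (div_mul_sub_le_of_le_div (hc j hj) (hγ j hj) (hℓ j hj))

theorem feddecsps_difference_lemma_general {ι E : Type*} [Fintype ι]
    [SeminormedAddCommGroup E] [InnerProductSpace ℝ E]
    {w : ι → ℝ} (hw_nonneg : ∀ i, 0 ≤ w i) (hw_sum : ∑ i, w i = 1)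
    {t0 t τ : ℕ} (ht0 : t0 ≤ t) (ht : t - t0 ≤ τ)
    {c : ℕ → ℝ} (hc : ∀ j ∈ Ico t0 t, 0 < c j) {B : ℝ}
    {F : ι → ℕ → E → ℝ} {ℓ : ι → ℝ} {xstar : E} (hℓ : ∀ i, ∀ j ∈ Ico t0 t, ℓ i ≤ F i j xstar)
    {y : E} {x : ℕ → ι → E} (hxy : ∀ i, x t0 i = y) {γ : ℕ → ι → ℝ}
    (hstep : ∀ i, ∀ j ∈ Ico t0 t,
      ‖x j i - x (j + 1) i‖ ^ 2 ≤ γ j i / c j * (F i j (x j i) - ℓ i))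
    (hγ : ∀ i, ∀ j ∈ Ico t0 t, γ j i ≤ B / c j) :
    ∑ i, w i * ‖(∑ k, w k • x t k) - x t i‖ ^ 2 ≤
      τ * ∑ i, w i * ∑ j ∈ Ico t0 t, γ j i / c j * (F i j (x j i) - F i j xstar)
        + B * τ * ∑ i, w i * ∑ j ∈ Ico t0 t, 1 / c j ^ 2 * (F i j xstar - ℓ i) := by
  have displacement (i : ι) : ‖y - x t i‖ ^ 2 ≤
      τ * ∑ j ∈ Ico t0 t, (γ j i / c j * (F i j (x j i) - F i j xstar)
        + B * (1 / c j ^ 2 * (F i j xstar - ℓ i))) := by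
    simp only [← dist_eq_norm] at hstep ⊢
    rw [← hxy i]
    exact dist_sq_le_mul_sum_of_stepsize_le (x := (x · i)) ht0 ht
      (fun j hj => (hc j hj).le) (hℓ i) (hstep i) (hγ i)
  calc ∑ i, w i * ‖(∑ k, w k • x t k) - x t i‖ ^ 2
      ≤ ∑ i, w i * ‖y - x t i‖ ^ 2 := sum_mul_norm_weightedMean_sub_sq_le univ hw_sum (x t) y
    _ ≤ ∑ i, w i * (τ * ∑ j ∈ Ico t0 t, (γ j i / c j * (F i j (x j i) - F i j xstar)
          + B * (1 / c j ^ 2 * (F i j xstar - ℓ i)))) := by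
        gcongr with i
        · exact hw_nonneg i
        · exact displacement i
    _ = _ := by
        simp only [sum_add_distrib, mul_add, ← mul_sum, mul_left_comm (w _)]
        ring

/-- **Difference lemma for FedDecSPS (Lemma D.3).** -/
theorem feddecsps_difference_lemma
    {d n : ℕ} (hn : 1 ≤ n) (τ : ℕ) (hτ : 1 ≤ τ)
    (c : ℕ → ℝ) (hc : ∀ j, 0 < c j) (γb : ℝ) (hγb : 0 < γb)
    (t0 t : ℕ) (ht0 : t0 ≤ t) (ht : t - t0 ≤ τ)
    (F : Fin n → ℕ → EuclideanSpace ℝ (Fin d) → ℝ)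
    (hdiff : ∀ i j, Differentiable ℝ (F i j))
    (ℓ : Fin n → ℝ) (hℓ : ∀ i j x, ℓ i ≤ F i j x)
    (y : EuclideanSpace ℝ (Fin d))
    (x : ℕ → Fin n → EuclideanSpace ℝ (Fin d)) (hxy : ∀ i, x t0 i = y)
    (γ : ℕ → Fin n → ℝ)
    (hγineq : ∀ j i, ‖γ j i • gradient (F i j) (x j i)‖ ^ 2
      ≤ γ j i / c j * (F i j (x j i) - ℓ i))
    (hγub : ∀ j i, γ j i ≤ c 0 * γb / c j)
    (hx : ∀ j i, t0 ≤ j → j < t →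
      x (j + 1) i = x j i - γ j i • gradient (F i j) (x j i))
    (xstar : EuclideanSpace ℝ (Fin d)) :
    (n : ℝ)⁻¹ * ∑ i, ‖((n : ℝ)⁻¹ • ∑ k, x t k) - x t i‖ ^ 2
      ≤ (τ : ℝ) / n * ∑ i, ∑ j ∈ Finset.Ico t0 t,
          γ j i / c j * (F i j (x j i) - F i j xstar)
        + c 0 * γb * τ / n * ∑ i, ∑ j ∈ Finset.Ico t0 t,
            1 / (c j) ^ 2 * (F i j xstar - ℓ i) := by
  have hstep (i : Fin n) (j : ℕ) (hj : j ∈ Ico t0 t) :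
      ‖x j i - x (j + 1) i‖ ^ 2 ≤ γ j i / c j * (F i j (x j i) - ℓ i) := by
    rw [hx j i (mem_Ico.1 hj).1 (mem_Ico.1 hj).2, sub_sub_cancel]
    exact hγineq j i
  simpa only [← mul_sum, ← smul_sum, div_eq_mul_inv, mul_assoc] using
    feddecsps_difference_lemma_general (w := fun _ => (n : ℝ)⁻¹) (B := c 0 * γb)
      (fun _ => by positivity) (by simp [Nat.one_le_iff_ne_zero.1 hn]) ht0 ht (fun j _ => hc j)
      (fun i j _ => hℓ i j xstar) hxy hstep (fun i j _ => hγub j i)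
end
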